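/- Let b ≥ 1/2 and let u₀ : (0,∞) → ℝ be bounded and continuous. With the Bessel heat kernel q_τ(z,ζ,b) = (√(zζ)/τ)·(ζ/z)^b·exp(−(z²+ζ²)/(2τ))·I_{b−1/2}(zζ/τ), one has, for every fixed z > 0, lim_{τ→0⁺} ∫_0^∞ u₀(ζ)·q_τ(z,ζ,b) dζ = u₀(z). -/

import Mathlib

/-- Modified Bessel function of the first kind,
`I_ν(x) = Σ_{k=0}^∞ (x/2)^{2k+ν}/(k!·Γ(k+ν+1))`. -/
noncomputable def besselI (ν x : ℝ) : ℝ :=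
  ∑' k : ℕ, (x / 2) ^ (2 * (k : ℝ) + ν) / ((Nat.factorial k : ℝ) * Real.Gamma ((k : ℝ) + ν + 1))

/-- Bessel heat kernel
`q_τ(z,ζ,b) = (√(zζ)/τ)·(ζ/z)^b·exp(−(z²+ζ²)/(2τ))·I_{b−1/2}(zζ/τ)`. -/
noncomputable def besselKernel (b s z ζ : ℝ) : ℝ :=
  Real.sqrt (z * ζ) / s * (ζ / z) ^ b * Real.exp (-(z ^ 2 + ζ ^ 2) / (2 * s)) *
    besselI (b - 1 / 2) (z * ζ / s)

/-!
If `X` has density `besselKernel b τ z`, then `X ^ 2` is a Poisson mixture of gamma laws: given a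
Poisson variable `k` of mean `z ^ 2 / (2 * τ)`, it has the gamma law of shape `k + b + 1 / 2` and
rate `1 / (2 * τ)`. This is the power series of the Bessel function read term by term, and it is
valid for every `b > -1 / 2`. Hence the kernel has mass one, and the means and variances of the
gamma and Poisson laws give `E (X ^ 2 - z ^ 2) ^ 2 = O(τ)`. By Chebyshev's inequality the kernel
therefore concentrates at `z` as `τ → 0⁺`, and no asymptotics of the Bessel function are needed.
-/

open MeasureTheory ProbabilityTheory Filter Set
open scoped NNReal Topology

section ApproximateIdentity

variable {X ι E : Type*} [MeasurableSpace X] {μ : Measure X} [NormedAddCommGroup E]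
  {l : Filter ι} {K : ι → X → ℝ} {φ : X → ℝ}

lemma exists_norm_sub_le_add_mul_of_continuousAt [TopologicalSpace X] {u : X → E} {x₀ : X}
    (hφ_nonneg : 0 ≤ᵐ[μ] φ) (hφ : ∀ U ∈ 𝓝 x₀, ∃ δ > 0, ∀ᵐ x ∂μ, x ∉ U → δ ≤ φ x)
    (hu : ContinuousAt u x₀) {M : ℝ} (hM : ∀ᵐ x ∂μ, ‖u x‖ ≤ M) {ε : ℝ} (hε : 0 < ε) :
    ∃ C, ∀ᵐ x ∂μ, ‖u x - u x₀‖ ≤ ε + C * φ x := by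
  obtain ⟨δ, hδ, hδφ⟩ := hφ _ (hu.preimage_mem_nhds (Metric.ball_mem_nhds _ hε))
  refine ⟨(|M| + ‖u x₀‖) / δ, ?_⟩
  filter_upwards [hφ_nonneg, hM, hδφ] with x hφx hMx hδx
  by_cases hx : x ∈ u ⁻¹' Metric.ball (u x₀) ε
  · have hnear : ‖u x - u x₀‖ < ε := mem_ball_iff_norm.1 hx
    have : 0 ≤ (|M| + ‖u x₀‖) / δ * φ x := mul_nonneg (by positivity) hφx
    linarith
  · calc ‖u x - u x₀‖ ≤ |M| + ‖u x₀‖ :=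
        (norm_sub_le _ _).trans (add_le_add_left (hMx.trans (le_abs_self M)) _)
      _ = (|M| + ‖u x₀‖) / δ * δ := by field_simp
      _ ≤ (|M| + ‖u x₀‖) / δ * φ x := mul_le_mul_of_nonneg_left (hδx hx) (by positivity)
      _ ≤ ε + (|M| + ‖u x₀‖) / δ * φ x := le_add_of_nonneg_left hε.le

variable [NormedSpace ℝ E]

lemma norm_integral_smul_le_of_norm_le_add_mul {k : X → ℝ} {v : X → E} {ε C : ℝ}
    (hk_nonneg : 0 ≤ᵐ[μ] k) (hk : Integrable k μ) (hφk : Integrable (fun x ↦ φ x * k x) μ)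
    (hv : ∀ᵐ x ∂μ, ‖v x‖ ≤ ε + C * φ x) :
    ‖∫ x, k x • v x ∂μ‖ ≤ ε * ∫ x, k x ∂μ + C * ∫ x, φ x * k x ∂μ := by
  rw [← integral_const_mul, ← integral_const_mul,
    ← integral_add (hk.const_mul ε) (hφk.const_mul C)]
  refine norm_integral_le_of_norm_le ((hk.const_mul ε).add (hφk.const_mul C)) ?_
  filter_upwards [hk_nonneg, hv] with x hkx hvx
  calc ‖k x • v x‖ = k x * ‖v x‖ := by rw [norm_smul, Real.norm_of_nonneg hkx]
    _ ≤ k x * (ε + C * φ x) := mul_le_mul_of_nonneg_left hvx hkx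
    _ = ε * k x + C * (φ x * k x) := by ring

lemma tendsto_integral_smul_zero_of_forall_norm_le_add_mul {v : X → E}
    (hK_nonneg : ∀ᶠ i in l, 0 ≤ᵐ[μ] K i) (hK : ∀ᶠ i in l, Integrable (K i) μ)
    (hφK : ∀ᶠ i in l, Integrable (fun x ↦ φ x * K i x) μ)
    (hK_one : Tendsto (fun i ↦ ∫ x, K i x ∂μ) l (𝓝 1))
    (hφK_zero : Tendsto (fun i ↦ ∫ x, φ x * K i x ∂μ) l (𝓝 0))
    (hv : ∀ ε > 0, ∃ C, ∀ᵐ x ∂μ, ‖v x‖ ≤ ε + C * φ x) :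
    Tendsto (fun i ↦ ∫ x, K i x • v x ∂μ) l (𝓝 0) := by
  refine NormedAddGroup.tendsto_nhds_zero.2 fun ε hε ↦ ?_
  obtain ⟨C, hC⟩ := hv (ε / 2) (half_pos hε)
  have hlim : Tendsto (fun i ↦ ε / 2 * ∫ x, K i x ∂μ + C * ∫ x, φ x * K i x ∂μ) l
      (𝓝 (ε / 2)) := by
    simpa using (hK_one.const_mul (ε / 2)).add (hφK_zero.const_mul C)
  filter_upwards [hK_nonneg, hK, hφK, hlim.eventually_lt_const (half_lt_self hε)]
    with i hi_nonneg hi hφi hlt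
  exact (norm_integral_smul_le_of_norm_le_add_mul hi_nonneg hi hφi hC).trans_lt hlt

theorem tendsto_integral_smul_of_tendsto_integral_mul_zero [CompleteSpace E] [TopologicalSpace X]
    {u : X → E} {x₀ : X} (hK_nonneg : ∀ᶠ i in l, 0 ≤ᵐ[μ] K i) (hK : ∀ᶠ i in l, Integrable (K i) μ)
    (hφK : ∀ᶠ i in l, Integrable (fun x ↦ φ x * K i x) μ)
    (hK_one : Tendsto (fun i ↦ ∫ x, K i x ∂μ) l (𝓝 1))
    (hφK_zero : Tendsto (fun i ↦ ∫ x, φ x * K i x ∂μ) l (𝓝 0))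
    (hφ_nonneg : 0 ≤ᵐ[μ] φ) (hφ : ∀ U ∈ 𝓝 x₀, ∃ δ > 0, ∀ᵐ x ∂μ, x ∉ U → δ ≤ φ x)
    (hu_meas : AEStronglyMeasurable u μ) (hu : ContinuousAt u x₀)
    (hu_bdd : ∃ M, ∀ᵐ x ∂μ, ‖u x‖ ≤ M) :
    Tendsto (fun i ↦ ∫ x, K i x • u x ∂μ) l (𝓝 (u x₀)) := by
  obtain ⟨M, hM⟩ := hu_bdd
  have hdiff : Tendsto (fun i ↦ ∫ x, K i x • (u x - u x₀) ∂μ) l (𝓝 0) :=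
    tendsto_integral_smul_zero_of_forall_norm_le_add_mul hK_nonneg hK hφK hK_one hφK_zero
      fun _ hε ↦ exists_norm_sub_le_add_mul_of_continuousAt hφ_nonneg hφ hu hM hε
  have hconst : Tendsto (fun i ↦ ∫ x, K i x • u x₀ ∂μ) l (𝓝 (u x₀)) := by
    simpa only [integral_smul_const, one_smul] using hK_one.smul_const (u x₀)
  have hsum := hdiff.add hconst
  rw [zero_add] at hsum
  refine hsum.congr' ?_
  filter_upwards [hK] with i hi
  have hiu : Integrable (fun x ↦ K i x • (u x - u x₀)) μ :=
    hi.smul_bdd _ (hu_meas.sub aestronglyMeasurable_const)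
      (hM.mono fun x hx ↦ (norm_sub_le _ _).trans (add_le_add_left hx _))
  rw [← integral_add hiu (hi.smul_const _)]
  simp only [smul_sub, sub_add_cancel]

end ApproximateIdentity

lemma integral_sub_sq_eq_variance_add_sq {Ω : Type*} [MeasurableSpace Ω] {μ : Measure Ω}
    [IsProbabilityMeasure μ] {Y : Ω → ℝ} (hY : MemLp Y 2 μ) (c : ℝ) :
    ∫ ω, (Y ω - c) ^ 2 ∂μ = Var[Y; μ] + (μ[Y] - c) ^ 2 := by
  have hYint : Integrable Y μ := hY.integrable one_le_two
  calc ∫ ω, (Y ω - c) ^ 2 ∂μ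
      = Var[fun ω ↦ Y ω - c; μ] + (∫ ω, (Y ω - c) ∂μ) ^ 2 :=
        eq_add_of_sub_eq (variance_eq_sub (hY.sub (memLp_const c))).symm
    _ = Var[Y; μ] + (μ[Y] - c) ^ 2 := by
        rw [variance_sub_const hY.1, integral_sub hYint (integrable_const c)]
        simp

section Gamma

variable {a r : ℝ} {E : Type*} [NormedAddCommGroup E] [NormedSpace ℝ E]

lemma gammaMeasure_eq_withDensity_restrict_Ioi (a r : ℝ) :
    gammaMeasure a r = (volume.restrict (Ioi 0)).withDensity (gammaPDF a r) := by
  rw [← withDensity_indicator measurableSet_Ioi, gammaMeasure]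
  refine withDensity_congr_ae ?_
  filter_upwards [Measure.ae_ne volume (0 : ℝ)] with x hx
  rcases hx.lt_or_gt with hneg | hpos
  · rw [gammaPDF_of_neg hneg, indicator_of_notMem (notMem_Ioi.2 hneg.le)]
  · rw [indicator_of_mem (mem_Ioi.2 hpos)]

lemma measurable_gammaPDF (a r : ℝ) : Measurable (gammaPDF a r) :=
  (measurable_gammaPDFReal a r).ennreal_ofReal

lemma integral_gammaMeasure (ha : 0 < a) (hr : 0 < r) (f : ℝ → E) :
    ∫ x, f x ∂gammaMeasure a r = ∫ x in Ioi 0, gammaPDFReal a r x • f x := by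
  rw [gammaMeasure_eq_withDensity_restrict_Ioi, integral_withDensity_eq_integral_toReal_smul
    (measurable_gammaPDF a r) (.of_forall fun _ ↦ ENNReal.ofReal_lt_top)]
  simp only [gammaPDF, ENNReal.toReal_ofReal (gammaPDFReal_nonneg ha hr _)]

lemma integrable_gammaMeasure_iff (ha : 0 < a) (hr : 0 < r) {f : ℝ → E} :
    Integrable f (gammaMeasure a r) ↔
      IntegrableOn (fun x ↦ gammaPDFReal a r x • f x) (Ioi 0) := by
  rw [gammaMeasure_eq_withDensity_restrict_Ioi, integrable_withDensity_iff_integrable_smul'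
    (measurable_gammaPDF a r) (.of_forall fun _ ↦ ENNReal.ofReal_lt_top)]
  simp only [gammaPDF, ENNReal.toReal_ofReal (gammaPDFReal_nonneg ha hr _), IntegrableOn]

lemma integral_rpow_gammaMeasure (ha : 0 < a) (hr : 0 < r) {p : ℝ} (hp : 0 < a + p) :
    ∫ x, x ^ p ∂gammaMeasure a r = Real.Gamma (a + p) / (Real.Gamma a * r ^ p) := by
  have hdensity : ∀ x ∈ Ioi (0 : ℝ), gammaPDFReal a r x • x ^ p =
      r ^ a / Real.Gamma a * (x ^ (a + p - 1) * Real.exp (-(r * x))) := fun x hx ↦ by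
    rw [gammaPDFReal, if_pos (le_of_lt hx), smul_eq_mul, show a + p - 1 = a - 1 + p by ring,
      Real.rpow_add hx]
    ring
  rw [integral_gammaMeasure ha hr, setIntegral_congr_fun measurableSet_Ioi hdensity,
    integral_const_mul, Real.integral_rpow_mul_exp_neg_mul_Ioi hp hr, one_div,
    Real.inv_rpow hr.le, Real.rpow_add hr]
  field_simp

lemma integrable_rpow_gammaMeasure (ha : 0 < a) (hr : 0 < r) {p : ℝ} (hp : 0 < a + p) :
    Integrable (fun x ↦ x ^ p) (gammaMeasure a r) := by
  have := Real.Gamma_pos_of_pos ha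
  have := Real.Gamma_pos_of_pos hp
  refine .of_integral_ne_zero ?_
  rw [integral_rpow_gammaMeasure ha hr hp]
  positivity

lemma memLp_id_gammaMeasure (ha : 0 < a) (hr : 0 < r) : MemLp id 2 (gammaMeasure a r) := by
  rw [memLp_two_iff_integrable_sq aestronglyMeasurable_id]
  simpa using integrable_rpow_gammaMeasure ha hr (p := 2) (by positivity)

lemma integral_id_gammaMeasure (ha : 0 < a) (hr : 0 < r) :
    ∫ x, x ∂gammaMeasure a r = a / r := by
  have := integral_rpow_gammaMeasure ha hr (p := 1) (by positivity)
  have hΓ := (Real.Gamma_pos_of_pos ha).ne'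
  simp only [Real.rpow_one, Real.Gamma_add_one ha.ne'] at this
  rw [this]
  field_simp

lemma integral_sq_gammaMeasure (ha : 0 < a) (hr : 0 < r) :
    ∫ x, x ^ 2 ∂gammaMeasure a r = a * (a + 1) / r ^ 2 := by
  have := integral_rpow_gammaMeasure ha hr (p := 2) (by positivity)
  have hΓ := (Real.Gamma_pos_of_pos ha).ne'
  rw [show a + 2 = a + 1 + 1 by ring, Real.Gamma_add_one (by positivity),
    Real.Gamma_add_one ha.ne'] at this
  simp only [Real.rpow_two] at this
  rw [this]
  field_simp

lemma variance_id_gammaMeasure (ha : 0 < a) (hr : 0 < r) :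
    Var[id; gammaMeasure a r] = a / r ^ 2 := by
  have := isProbabilityMeasure_gammaMeasure ha hr
  rw [variance_eq_sub (memLp_id_gammaMeasure ha hr)]
  simp only [Pi.pow_apply, id_eq, integral_id_gammaMeasure ha hr, integral_sq_gammaMeasure ha hr]
  ring

lemma integral_sub_sq_gammaMeasure (ha : 0 < a) (hr : 0 < r) (c : ℝ) :
    ∫ x, (x - c) ^ 2 ∂gammaMeasure a r = a / r ^ 2 + (a / r - c) ^ 2 := by
  have := isProbabilityMeasure_gammaMeasure ha hr
  simpa [variance_id_gammaMeasure ha hr, integral_id_gammaMeasure ha hr] using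
    integral_sub_sq_eq_variance_add_sq (memLp_id_gammaMeasure ha hr) c

end Gamma

section Poisson

lemma hasSum_poisson_descFactorial (r : ℝ≥0) (j : ℕ) :
    HasSum (fun k : ℕ ↦ Real.exp (-r) * r ^ k / k.factorial * (k.descFactorial j : ℝ))
      ((r : ℝ) ^ j) := by
  have hsmall : ∑ k ∈ Finset.range j,
      Real.exp (-r) * r ^ k / k.factorial * (k.descFactorial j : ℝ) = 0 :=
    Finset.sum_eq_zero fun k hk ↦ by
      simp [Nat.descFactorial_eq_zero_iff_lt.2 (Finset.mem_range.1 hk)]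
  have hshift : ∀ k : ℕ,
      Real.exp (-r) * r ^ (k + j) / (k + j).factorial * ((k + j).descFactorial j : ℝ) =
        r ^ j * (Real.exp (-r) * r ^ k / k.factorial) := fun k ↦ by
    have hfac : ((k + j).factorial : ℝ) = k.factorial * (k + j).descFactorial j := by
      rw [← Nat.factorial_mul_descFactorial (Nat.le_add_left j k), Nat.add_sub_cancel,
        Nat.cast_mul]
    have hne : ((k + j).descFactorial j : ℝ) ≠ 0 :=
      Nat.cast_ne_zero.2 (mt Nat.descFactorial_eq_zero_iff_lt.1 (Nat.le_add_left j k).not_gt)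
    rw [hfac]
    field_simp
    ring
  rw [← hasSum_nat_add_iff' j, hsmall, sub_zero]
  simpa only [hshift, mul_one] using (hasSum_one_poissonMeasure r).mul_left ((r : ℝ) ^ j)

variable (r : ℝ≥0)

lemma integrable_descFactorial_poissonMeasure (j : ℕ) :
    Integrable (fun k : ℕ ↦ (k.descFactorial j : ℝ)) (poissonMeasure r) := by
  rw [integrable_poissonMeasure_iff]
  simpa only [Real.norm_natCast] using (hasSum_poisson_descFactorial r j).summable

lemma integral_descFactorial_poissonMeasure (j : ℕ) :
    ∫ k : ℕ, (k.descFactorial j : ℝ) ∂poissonMeasure r = (r : ℝ) ^ j := by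
  rw [integral_poissonMeasure]
  exact (hasSum_poisson_descFactorial r j).tsum_eq

lemma integrable_natCast_poissonMeasure :
    Integrable (fun k : ℕ ↦ (k : ℝ)) (poissonMeasure r) := by
  simpa using integrable_descFactorial_poissonMeasure r 1

lemma integral_natCast_poissonMeasure : ∫ k : ℕ, (k : ℝ) ∂poissonMeasure r = r := by
  simpa using integral_descFactorial_poissonMeasure r 1

lemma natCast_sq_eq_descFactorial_add (k : ℕ) :
    (k : ℝ) ^ 2 = (k.descFactorial 2 : ℝ) + k := by
  rw [Nat.cast_descFactorial_two]
  ring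

lemma memLp_natCast_poissonMeasure :
    MemLp (fun k : ℕ ↦ (k : ℝ)) 2 (poissonMeasure r) := by
  rw [memLp_two_iff_integrable_sq .of_discrete]
  simp only [natCast_sq_eq_descFactorial_add]
  exact (integrable_descFactorial_poissonMeasure r 2).add (integrable_natCast_poissonMeasure r)

lemma variance_natCast_poissonMeasure :
    Var[fun k : ℕ ↦ (k : ℝ); poissonMeasure r] = r := by
  rw [variance_eq_sub (memLp_natCast_poissonMeasure r)]
  simp only [Pi.pow_apply, natCast_sq_eq_descFactorial_add]
  rw [integral_add (integrable_descFactorial_poissonMeasure r 2)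
    (integrable_natCast_poissonMeasure r), integral_descFactorial_poissonMeasure,
    integral_natCast_poissonMeasure]
  ring

lemma integral_natCast_sub_sq_poissonMeasure (c : ℝ) :
    ∫ k : ℕ, ((k : ℝ) - c) ^ 2 ∂poissonMeasure r = r + (r - c) ^ 2 := by
  rw [integral_sub_sq_eq_variance_add_sq (memLp_natCast_poissonMeasure r),
    variance_natCast_poissonMeasure, integral_natCast_poissonMeasure]

end Poisson

lemma integral_tsum_poisson_smul_gammaPDFReal_smul {E : Type*} [NormedAddCommGroup E]
    [NormedSpace ℝ E] [CompleteSpace E] {a : ℕ → ℝ} (ha : ∀ k, 0 < a k) {r : ℝ} (hr : 0 < r)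
    {q : ℝ≥0} {f : ℝ → E} (hf : ∀ k, Integrable f (gammaMeasure (a k) r))
    (hf_norm : Integrable (fun k ↦ ∫ y, ‖f y‖ ∂gammaMeasure (a k) r) (poissonMeasure q)) :
    ∫ y in Ioi (0 : ℝ), ∑' k : ℕ,
        (Real.exp (-q) * q ^ k / k.factorial) • gammaPDFReal (a k) r y • f y =
      ∫ k, ∫ y, f y ∂gammaMeasure (a k) r ∂poissonMeasure q := by
  set w : ℕ → ℝ := fun k ↦ Real.exp (-q) * q ^ k / k.factorial with hw
  set F : ℕ → ℝ → E := fun k y ↦ w k • gammaPDFReal (a k) r y • f y with hF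
  have hF_norm : ∀ k, ∫ y in Ioi 0, ‖F k y‖ = w k * ‖∫ y, ‖f y‖ ∂gammaMeasure (a k) r‖ :=
    fun k ↦ by
      have hw_nonneg : 0 ≤ w k := by positivity
      rw [Real.norm_of_nonneg (integral_nonneg fun _ ↦ norm_nonneg _),
        integral_gammaMeasure (ha k) hr, ← integral_const_mul]
      simp only [hF, norm_smul, smul_eq_mul, Real.norm_of_nonneg hw_nonneg,
        Real.norm_of_nonneg (gammaPDFReal_nonneg (ha k) hr _)]
  have hF_int : ∀ k, IntegrableOn (F k) (Ioi 0) := fun k ↦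
    ((integrable_gammaMeasure_iff (ha k) hr).1 (hf k)).smul (w k)
  have hF_summable : Summable fun k ↦ ∫ y in Ioi 0, ‖F k y‖ := by
    simpa only [hF_norm] using integrable_poissonMeasure_iff.1 hf_norm
  have hf_integral : Integrable (fun k ↦ ∫ y, f y ∂gammaMeasure (a k) r) (poissonMeasure q) :=
    hf_norm.mono' .of_discrete (.of_forall fun _ ↦ norm_integral_le_integral_norm f)
  rw [← integral_tsum_of_summable_integral_norm hF_int hF_summable,
    integral_poissonMeasure' hf_integral]
  simp only [hF, hw, integral_smul, integral_gammaMeasure (ha _) hr]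

section BesselKernel

variable {b τ z ζ : ℝ}

lemma sqrt_mul_rpow_mul_rpow_eq_poisson_mul_gamma (b : ℝ) (hτ : 0 < τ) (hz : 0 < z)
    (hζ : 0 < ζ) (k : ℕ) :
    √(z * ζ) / τ * (ζ / z) ^ b * (z * ζ / τ / 2) ^ (2 * (k : ℝ) + (b - 1 / 2)) =
      2 * ζ * ((z ^ 2 / (2 * τ)) ^ k *
        ((2 * τ)⁻¹ ^ (k + b + 1 / 2) * (ζ ^ 2) ^ (k + b + 1 / 2 - 1))) := by
  -- On a logarithmic scale this identity between powers is linear in the exponents.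
  obtain ⟨x, rfl⟩ : ∃ x, Real.exp x = z := ⟨Real.log z, Real.exp_log hz⟩
  obtain ⟨y, rfl⟩ : ∃ y, Real.exp y = ζ := ⟨Real.log ζ, Real.exp_log hζ⟩
  obtain ⟨t, ht⟩ : ∃ t, Real.exp t = 2 * τ := ⟨Real.log (2 * τ), Real.exp_log (by positivity)⟩
  obtain rfl : τ = Real.exp t / 2 := by linarith
  have hsqrt : √(Real.exp x * Real.exp y) / (Real.exp t / 2) =
      2 * (Real.exp ((x + y) * (1 / 2)) * Real.exp (-t)) := by
    rw [Real.sqrt_eq_rpow, ← Real.exp_add, ← Real.exp_mul, Real.exp_neg]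
    field_simp
  have harg : Real.exp x * Real.exp y / (Real.exp t / 2) / 2 = Real.exp (x + y - t) := by
    rw [Real.exp_sub, Real.exp_add]
    field_simp
  rw [hsqrt, harg, ← ht]
  simp only [mul_assoc, ← Real.exp_nat_mul, ← Real.exp_sub, ← Real.exp_neg, ← Real.exp_mul,
    ← Real.exp_add]
  congr 2
  push_cast
  ring

lemma besselKernel_eq_tsum_poisson_mul_gammaPDFReal (b : ℝ) (hτ : 0 < τ) (hz : 0 < z)
    (hζ : 0 < ζ) :
    besselKernel b τ z ζ = 2 * ζ * ∑' k : ℕ,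
      Real.exp (-(z ^ 2 / (2 * τ))) * (z ^ 2 / (2 * τ)) ^ k / k.factorial *
        gammaPDFReal (k + b + 1 / 2) (2 * τ)⁻¹ (ζ ^ 2) := by
  have hexp : Real.exp (-(z ^ 2 + ζ ^ 2) / (2 * τ)) =
      Real.exp (-(z ^ 2 / (2 * τ))) * Real.exp (-((2 * τ)⁻¹ * ζ ^ 2)) := by
    rw [← Real.exp_add]
    congr 1
    field_simp
    ring
  rw [besselKernel, besselI, ← tsum_mul_left, ← tsum_mul_left, hexp]
  refine tsum_congr fun k ↦ ?_
  rw [gammaPDFReal, if_pos (sq_nonneg ζ), show (k : ℝ) + (b - 1 / 2) + 1 = k + b + 1 / 2 by ring]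
  linear_combination
    Real.exp (-(z ^ 2 / (2 * τ))) * Real.exp (-((2 * τ)⁻¹ * ζ ^ 2)) /
      (k.factorial * Real.Gamma (k + b + 1 / 2)) *
        sqrt_mul_rpow_mul_rpow_eq_poisson_mul_gamma b hτ hz hζ k

lemma natCast_add_add_half_pos (hb : -1 / 2 < b) (k : ℕ) : 0 < k + b + 1 / 2 := by
  have : (0 : ℝ) ≤ k := k.cast_nonneg
  linarith

lemma besselKernel_nonneg (hb : -1 / 2 < b) (hτ : 0 < τ) (hz : 0 < z) (hζ : 0 < ζ) :
    0 ≤ besselKernel b τ z ζ := by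
  rw [besselKernel_eq_tsum_poisson_mul_gammaPDFReal b hτ hz hζ]
  exact mul_nonneg (by positivity) (tsum_nonneg fun k ↦ mul_nonneg (by positivity)
    (gammaPDFReal_nonneg (natCast_add_add_half_pos hb k) (by positivity) _))

lemma integral_comp_sq_mul_besselKernel_eq_integral_tsum (b : ℝ) (hτ : 0 < τ) (hz : 0 < z)
    (f : ℝ → ℝ) :
    ∫ ζ in Ioi (0 : ℝ), f (ζ ^ 2) * besselKernel b τ z ζ =
      ∫ y in Ioi (0 : ℝ), ∑' k : ℕ,
        Real.exp (-(z ^ 2 / (2 * τ))) * (z ^ 2 / (2 * τ)) ^ k / k.factorial *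
          (gammaPDFReal (k + b + 1 / 2) (2 * τ)⁻¹ y * f y) := by
  refine .trans ?_ (integral_comp_rpow_Ioi_of_pos two_pos)
  refine setIntegral_congr_fun measurableSet_Ioi fun ζ hζ ↦ ?_
  simp only [← mul_assoc, tsum_mul_right, smul_eq_mul, Real.rpow_two]
  rw [besselKernel_eq_tsum_poisson_mul_gammaPDFReal b hτ hz hζ,
    show (2 : ℝ) - 1 = 1 by norm_num, Real.rpow_one]
  ring

theorem integral_comp_sq_mul_besselKernel (hb : -1 / 2 < b) (hτ : 0 < τ) (hz : 0 < z)
    {f : ℝ → ℝ} (hf : ∀ k : ℕ, Integrable f (gammaMeasure (k + b + 1 / 2) (2 * τ)⁻¹))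
    (hf_norm : Integrable (fun k : ℕ ↦ ∫ y, ‖f y‖ ∂gammaMeasure (k + b + 1 / 2) (2 * τ)⁻¹)
      (poissonMeasure (z ^ 2 / (2 * τ)).toNNReal)) :
    ∫ ζ in Ioi (0 : ℝ), f (ζ ^ 2) * besselKernel b τ z ζ =
      ∫ k : ℕ, ∫ y, f y ∂gammaMeasure (k + b + 1 / 2) (2 * τ)⁻¹
        ∂poissonMeasure (z ^ 2 / (2 * τ)).toNNReal := by
  have hrate : ((z ^ 2 / (2 * τ)).toNNReal : ℝ) = z ^ 2 / (2 * τ) :=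
    Real.coe_toNNReal _ (by positivity)
  simpa only [hrate, smul_eq_mul, integral_comp_sq_mul_besselKernel_eq_integral_tsum b hτ hz] using
    integral_tsum_poisson_smul_gammaPDFReal_smul (natCast_add_add_half_pos hb)
      (inv_pos.2 (mul_pos two_pos hτ)) hf hf_norm

lemma integral_besselKernel (hb : -1 / 2 < b) (hτ : 0 < τ) (hz : 0 < z) :
    ∫ ζ in Ioi (0 : ℝ), besselKernel b τ z ζ = 1 := by
  have (k : ℕ) : IsProbabilityMeasure (gammaMeasure (k + b + 1 / 2) (2 * τ)⁻¹) :=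
    isProbabilityMeasure_gammaMeasure (natCast_add_add_half_pos hb k) (by positivity)
  have hmass : ∀ k : ℕ, ∫ _, (1 : ℝ) ∂gammaMeasure (k + b + 1 / 2) (2 * τ)⁻¹ = 1 := fun k ↦ by
    rw [integral_const, probReal_univ, one_smul]
  have hmix := integral_comp_sq_mul_besselKernel hb hτ hz (f := fun _ ↦ 1)
    (fun k ↦ integrable_const 1) (by simpa only [norm_one, hmass] using integrable_const 1)
  simpa only [one_mul, hmass, integral_const, probReal_univ, one_smul] using hmix

lemma integral_sub_sq_gammaMeasure_natCast_add_half (hb : -1 / 2 < b) (hτ : 0 < τ) (c : ℝ)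
    (k : ℕ) :
    ∫ y, (y - c) ^ 2 ∂gammaMeasure (k + b + 1 / 2) (2 * τ)⁻¹ =
      (2 * τ) ^ 2 * (k + (b + 1 / 2) + (k - (c / (2 * τ) - (b + 1 / 2))) ^ 2) := by
  rw [integral_sub_sq_gammaMeasure (natCast_add_add_half_pos hb k) (by positivity)]
  field_simp
  ring

lemma integral_sq_sub_sq_sq_mul_besselKernel (hb : -1 / 2 < b) (hτ : 0 < τ) (hz : 0 < z) :
    ∫ ζ in Ioi (0 : ℝ), (ζ ^ 2 - z ^ 2) ^ 2 * besselKernel b τ z ζ =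
      4 * τ * z ^ 2 + 4 * τ ^ 2 * (b + 1 / 2) * (b + 3 / 2) := by
  set c := z ^ 2 / (2 * τ) - (b + 1 / 2) with hc
  set r := (z ^ 2 / (2 * τ)).toNNReal with hr
  have hrate : (r : ℝ) = z ^ 2 / (2 * τ) := Real.coe_toNNReal _ (by positivity)
  have hlin : Integrable (fun k : ℕ ↦ (k : ℝ) + (b + 1 / 2)) (poissonMeasure r) :=
    (integrable_natCast_poissonMeasure r).add (integrable_const _)
  have hsq : Integrable (fun k : ℕ ↦ ((k : ℝ) - c) ^ 2) (poissonMeasure r) :=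
    ((memLp_natCast_poissonMeasure r).sub (memLp_const c)).integrable_sq
  have hgamma : ∀ k : ℕ, Integrable (fun y ↦ (y - z ^ 2) ^ 2)
      (gammaMeasure (k + b + 1 / 2) (2 * τ)⁻¹) := fun k ↦ by
    have ha := natCast_add_add_half_pos hb k
    have := isProbabilityMeasure_gammaMeasure ha (inv_pos.2 (mul_pos two_pos hτ))
    exact ((memLp_id_gammaMeasure ha (by positivity)).sub (memLp_const (z ^ 2))).integrable_sq
  rw [integral_comp_sq_mul_besselKernel hb hτ hz (f := fun y ↦ (y - z ^ 2) ^ 2) hgamma]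
  · simp only [integral_sub_sq_gammaMeasure_natCast_add_half hb hτ, ← hc, ← hr]
    rw [integral_const_mul, integral_add hlin hsq, integral_natCast_sub_sq_poissonMeasure,
      integral_add (integrable_natCast_poissonMeasure r) (integrable_const _),
      integral_natCast_poissonMeasure, hc, hrate]
    simp only [integral_const, probReal_univ, one_smul]
    field_simp
    ring
  · simp only [Real.norm_of_nonneg (sq_nonneg _),
      integral_sub_sq_gammaMeasure_natCast_add_half hb hτ]
    exact (hlin.add hsq).const_mul _

lemma exists_pos_le_sq_sub_sq_sq_of_notMem_nhds (hz : 0 < z) {U : Set ℝ} (hU : U ∈ 𝓝 z) :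
    ∃ δ > 0, ∀ ζ > 0, ζ ∉ U → δ ≤ (ζ ^ 2 - z ^ 2) ^ 2 := by
  obtain ⟨η, hη, hηU⟩ := Metric.mem_nhds_iff.1 hU
  refine ⟨(η * z) ^ 2, by positivity, fun ζ hζ hζU ↦ ?_⟩
  have hfar : η ≤ |ζ - z| := not_lt.1 fun h ↦ hζU (hηU h)
  refine sq_le_sq.2 ?_
  calc |η * z| = η * z := abs_of_pos (by positivity)
    _ ≤ |ζ - z| * (ζ + z) := by gcongr; linarith
    _ = |ζ ^ 2 - z ^ 2| := by
      rw [← abs_of_pos (add_pos hζ hz), ← abs_mul]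
      ring_nf

theorem bessel_superposition_initial_condition_general {E : Type*} [NormedAddCommGroup E]
    [NormedSpace ℝ E] [CompleteSpace E] (hb : -1 / 2 < b) (hz : 0 < z) {u : ℝ → E}
    (hu_meas : AEStronglyMeasurable u (volume.restrict (Ioi 0))) (hu : ContinuousAt u z)
    (hu_bdd : ∃ M : ℝ, ∀ᵐ ζ ∂volume.restrict (Ioi 0), ‖u ζ‖ ≤ M) :
    Tendsto (fun τ ↦ ∫ ζ in Ioi (0 : ℝ), besselKernel b τ z ζ • u ζ) (𝓝[>] 0) (𝓝 (u z)) := by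
  have hpos : ∀ᶠ τ : ℝ in 𝓝[>] 0, 0 < τ := self_mem_nhdsWithin
  have hmoment : Tendsto (fun τ : ℝ ↦ 4 * τ * z ^ 2 + 4 * τ ^ 2 * (b + 1 / 2) * (b + 3 / 2))
      (𝓝[>] 0) (𝓝 0) :=
    (Continuous.tendsto' (by fun_prop) 0 0 (by simp)).mono_left nhdsWithin_le_nhds
  refine tendsto_integral_smul_of_tendsto_integral_mul_zero (φ := fun ζ ↦ (ζ ^ 2 - z ^ 2) ^ 2)
    (hpos.mono fun τ hτ ↦ ?_) (hpos.mono fun τ hτ ↦ ?_) (hpos.mono fun τ hτ ↦ ?_)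
    (tendsto_const_nhds.congr' (hpos.mono fun τ hτ ↦ (integral_besselKernel hb hτ hz).symm))
    (hmoment.congr' (hpos.mono fun τ hτ ↦ (integral_sq_sub_sq_sq_mul_besselKernel hb hτ hz).symm))
    (.of_forall fun ζ ↦ sq_nonneg _) (fun U hU ↦ ?_) hu_meas hu hu_bdd
  · exact ae_restrict_of_forall_mem measurableSet_Ioi fun ζ ↦ besselKernel_nonneg hb hτ hz
  · exact integrable_of_integral_eq_one (integral_besselKernel hb hτ hz)
  · have : 0 < b + 1 / 2 := by linarith
    have : 0 < b + 3 / 2 := by linarith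
    refine .of_integral_ne_zero ?_
    rw [integral_sq_sub_sq_sq_mul_besselKernel hb hτ hz]
    positivity
  · obtain ⟨δ, hδ, hδU⟩ := exists_pos_le_sq_sub_sq_sq_of_notMem_nhds hz hU
    exact ⟨δ, hδ, ae_restrict_of_forall_mem measurableSet_Ioi hδU⟩

end BesselKernel

/-- the superposition integral of bounded continuous initial data
against the Bessel heat kernel recovers the initial data as `τ → 0⁺`:
`lim_{τ→0⁺} ∫_0^∞ u₀(ζ)q_τ(z,ζ,b)dζ = u₀(z)` for every `z > 0`. -/
theorem bessel_superposition_initial_condition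
    (b : ℝ) (hb : 1 / 2 ≤ b)
    (u₀ : ℝ → ℝ)
    (hu₀cont : ContinuousOn u₀ (Set.Ioi 0))
    (hu₀bdd : ∃ M : ℝ, ∀ ζ ∈ Set.Ioi (0 : ℝ), |u₀ ζ| ≤ M)
    (z : ℝ) (hz : 0 < z) :
    Filter.Tendsto (fun τ => ∫ ζ in Set.Ioi (0 : ℝ), u₀ ζ * besselKernel b τ z ζ)
      (nhdsWithin 0 (Set.Ioi 0)) (nhds (u₀ z)) := by
  obtain ⟨M, hM⟩ := hu₀bdd
  simpa only [smul_eq_mul, mul_comm] using bessel_superposition_initial_condition_general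
    (by linarith) hz (hu₀cont.aestronglyMeasurable measurableSet_Ioi)
    (hu₀cont.continuousAt (Ioi_mem_nhds hz)) ⟨M, ae_restrict_of_forall_mem measurableSet_Ioi hM⟩
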